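/- arXiv:0709.4485 — 3 statements merged into one kernel-verified Lean document; each statement's English description precedes it below -/
import Mathlib

section
/- Superadditivity of rank: In the abstract setting, for all D, D' ∈ Div(X) such that r(D) ≥ 0 and r(D') ≥ 0, one has r(D + D') ≥ r(D) + r(D'). -/
/-!
If `rk (D + D')` were smaller than `rk D + rk D'`, it would be witnessed by an effective `E` with
`|D + D' - E| = ∅` and `deg E ≤ rk D + rk D'`. Such an `E` splits as `E₁ + E₂` with both parts
effective, `deg E₁ ≤ rk D` and `deg E₂ ≤ rk D'` (`exists_split`). By definition of the rank,
`|D - E₁|` and `|D' - E₂|` are nonempty, and adding effective representatives gives an element of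
`|D + D' - E|`, a contradiction.
-/

open scoped Classical

noncomputable section

/-- Degree of a divisor (finitely supported `ℤ`-valued function). -/
def ADeg {X : Type} (D : X →₀ ℤ) : ℤ := D.sum fun _ n => n

/-- A divisor is effective if it is nonnegative everywhere. -/
def AEff {X : Type} (D : X →₀ ℤ) : Prop := ∀ x, 0 ≤ D x

/-- `|D| ≠ ∅`: some effective divisor is `R`-equivalent to `D`. -/
def ALinNE {X : Type} (R : (X →₀ ℤ) → (X →₀ ℤ) → Prop) (D : X →₀ ℤ) : Prop :=
  ∃ E : X →₀ ℤ, AEff E ∧ R E D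

/-- The set of numbers `deg E - 1` over effective divisors `E` with `|D - E| = ∅`;
the rank of `D` is the least element of this set. -/
def ARankSet {X : Type} (R : (X →₀ ℤ) → (X →₀ ℤ) → Prop) (D : X →₀ ℤ) : Set ℤ :=
  {n | ∃ E : X →₀ ℤ, AEff E ∧ ¬ ALinNE R (D - E) ∧ n = ADeg E - 1}

/-- `ε(D) = 0` if `|D| ≠ ∅` and `ε(D) = 1` otherwise. -/
def AEps {X : Type} (R : (X →₀ ℤ) → (X →₀ ℤ) → Prop) (D : X →₀ ℤ) : ZMod 2 :=
  if ALinNE R D then 0 else 1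

lemma ADeg_add {X : Type} (D E : X →₀ ℤ) : ADeg (D + E) = ADeg D + ADeg E :=
  Finsupp.sum_add_index' (fun _ => rfl) (fun _ _ _ => rfl)

lemma ADeg_single {X : Type} (x : X) : ADeg (Finsupp.single x 1) = 1 :=
  Finsupp.sum_single_index rfl

/-- An effective divisor of degree at most `a + b` is a sum of two effective divisors of degrees
at most `a` and `b`. The induction on `a` moves one point at a time into the first summand. -/
lemma exists_split {X : Type} (a b : ℕ) (E : X →₀ ℤ) (hE : AEff E)
    (hdeg : ADeg E ≤ a + b) :
    ∃ E₁ E₂ : X →₀ ℤ, AEff E₁ ∧ AEff E₂ ∧ E = E₁ + E₂ ∧ ADeg E₁ ≤ a ∧ ADeg E₂ ≤ b := by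
  induction a generalizing E with
  | zero => exact ⟨0, E, fun _ => le_rfl, hE, by simp, by simp [ADeg], by simpa using hdeg⟩
  | succ a ih =>
    by_cases h0 : E = 0
    · subst h0
      exact ⟨0, 0, hE, hE, by simp, by simp [ADeg]; positivity, by simp [ADeg]⟩
    · obtain ⟨x, hx⟩ := Finsupp.ne_iff.mp h0
      have hx1 : 0 < E x := lt_of_le_of_ne (hE x) (Ne.symm hx)
      have hF : E - Finsupp.single x 1 + Finsupp.single x 1 = E := sub_add_cancel _ _
      have hFdeg := congrArg ADeg hF
      rw [ADeg_add, ADeg_single] at hFdeg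
      push_cast at hdeg
      obtain ⟨E₁, E₂, h₁, h₂, hsum, hd₁, hd₂⟩ := ih (E - Finsupp.single x 1)
        (fun y => by
          have hy := hE y
          by_cases hxy : x = y
          · subst hxy
            simp only [Finsupp.sub_apply, Finsupp.single_eq_same]
            omega
          · simpa [Finsupp.single_apply, hxy] using hy)
        (by omega)
      refine ⟨E₁ + Finsupp.single x 1, E₂, fun y => ?_, h₂, ?_, ?_, hd₂⟩
      · have hy := h₁ y
        simp only [Finsupp.add_apply, Finsupp.single_apply]
        split_ifs <;> omega
      · rw [add_right_comm, ← hsum, hF]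
      · rw [ADeg_add, ADeg_single]
        push_cast
        omega

/-- If `deg F` does not exceed the rank of `D`, then `|D - F|` is nonempty. -/
lemma linNE_sub_of_deg_le {X : Type} {R : (X →₀ ℤ) → (X →₀ ℤ) → Prop} {D F : X →₀ ℤ} {r : ℤ}
    (hr : IsLeast (ARankSet R D) r) (hF : AEff F) (hdeg : ADeg F ≤ r) : ALinNE R (D - F) := by
  by_contra h
  have := hr.2 ⟨F, hF, h, rfl⟩
  omega

/-- Superadditivity of rank. -/
theorem rank_superadditive {X : Type} [Nonempty X]
    (R : (X →₀ ℤ) → (X →₀ ℤ) → Prop)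
    (hEquiv : Equivalence R)
    (hE1 : ∀ D D' : X →₀ ℤ, R D D' → ADeg D = ADeg D')
    (hE2 : ∀ D₁ D₁' D₂ D₂' : X →₀ ℤ, R D₁ D₁' → R D₂ D₂' → R (D₁ + D₂) (D₁' + D₂'))
    (rk : (X →₀ ℤ) → ℤ) (hrk : ∀ D, IsLeast (ARankSet R D) (rk D))
    (D D' : X →₀ ℤ) (hD : 0 ≤ rk D) (hD' : 0 ≤ rk D') :
    rk D + rk D' ≤ rk (D + D') := by
  obtain ⟨E, hE, hempty, hrank⟩ := (hrk (D + D')).1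
  by_contra! hlt
  obtain ⟨E₁, E₂, h₁, h₂, rfl, hd₁, hd₂⟩ :=
    exists_split (rk D).toNat (rk D').toNat E hE (by omega)
  obtain ⟨G₁, hG₁, hR₁⟩ := linNE_sub_of_deg_le (hrk D) h₁ (by omega)
  obtain ⟨G₂, hG₂, hR₂⟩ := linNE_sub_of_deg_le (hrk D') h₂ (by omega)
  refine hempty ⟨G₁ + G₂, fun x => add_nonneg (hG₁ x) (hG₂ x), ?_⟩
  rw [add_sub_add_comm]
  exact hE2 _ _ _ _ hR₁ hR₂
end
end

section
/- Alternative rank formula: In the abstract setting, suppose property (RR1) holds: for every D ∈ Div(X) there exists ν ∈ N such that exactly one of |D| and |ν − D| is empty. Then for every D ∈ Div(X), the number r(D) + 1 is the least element of the set {deg⁺(D' − ν) : D' ∈ Div(X), D' ~ D, ν ∈ N}; in other words, r(D) = (min over D' ~ D and ν ∈ N of deg⁺(D' − ν)) − 1. -/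
/-!
Write `~` for the relation `R` and `N` for the set of divisors `ν` of degree `g - 1` with `|ν| = ∅`.

For `D' ~ D` and `ν ∈ N`, write `D' - ν = P - M` with `P` and `M` its positive and negative parts.
Then `D' - P = ν - M`, and `|ν - M|` is empty since adding `M` to one of its members would give a
member of `|ν|`. So `P` competes in the definition of the rank, whence
`r(D) + 1 ≤ deg P = deg⁺(D' - ν)`.

Conversely, let `E` be effective with `|D - E| = ∅` and `deg E = r(D) + 1`. Property (RR1) for
`D - E` gives `ν ∈ N` and an effective `F ~ ν - (D - E)`. Then `D' = ν + E - F` is equivalent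
to `D`, and `deg⁺(D' - ν) = deg⁺(E - F) ≤ deg E = r(D) + 1`; by the first part this is an equality.
-/

open scoped Classical

noncomputable section

/-- `deg⁺(D) = Σ_x max{D(x), 0}`. -/
def ADegPlus {X : Type} (D : X →₀ ℤ) : ℤ := D.sum fun _ n => max n 0

/-- The positive part `x ↦ max (D x) 0` of a divisor. -/
def APos {X : Type} (D : X →₀ ℤ) : X →₀ ℤ := D.mapRange (fun n => max n 0) (by simp)

lemma aPos_apply {X : Type} (D : X →₀ ℤ) (x : X) : APos D x = max (D x) 0 := by
  simp [APos]

lemma aDeg_aPos {X : Type} (D : X →₀ ℤ) : ADeg (APos D) = ADegPlus D := by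
  unfold ADeg APos ADegPlus
  exact Finsupp.sum_mapRange_index (by simp)

lemma aEff_aPos {X : Type} (D : X →₀ ℤ) : AEff (APos D) := fun x => by
  simp [aPos_apply]

lemma aDeg_sub {X : Type} (D E : X →₀ ℤ) : ADeg (D - E) = ADeg D - ADeg E :=
  Finsupp.sum_sub_index (by simp)

lemma aDeg_nonneg {X : Type} {D : X →₀ ℤ} (h : AEff D) : 0 ≤ ADeg D :=
  Finset.sum_nonneg fun x _ => h x

lemma aDegPlus_sub_le {X : Type} {E F : X →₀ ℤ} (hE : AEff E) (hF : AEff F) :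
    ADegPlus (E - F) ≤ ADeg E := by
  have h : AEff (E - APos (E - F)) := fun x => by
    have h1 := hE x
    have h2 := hF x
    simp only [Finsupp.sub_apply, aPos_apply]
    omega
  have h3 := aDeg_nonneg h
  rw [aDeg_sub, aDeg_aPos] at h3
  linarith

/-- Since `D - P ~ D' - P = ν - M`, with `P` and `M` the positive and negative parts of `D' - ν`, a
member of `|D - P|` would yield one of `|ν|`. -/
lemma not_aLinNE_sub_aPos {X : Type} {R : (X →₀ ℤ) → (X →₀ ℤ) → Prop}
    (hEquiv : Equivalence R)
    (hE2 : ∀ D₁ D₁' D₂ D₂' : X →₀ ℤ, R D₁ D₁' → R D₂ D₂' → R (D₁ + D₂) (D₁' + D₂'))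
    {D D' ν : X →₀ ℤ} (hD : R D' D) (hν : ¬ ALinNE R ν) :
    ¬ ALinNE R (D - APos (D' - ν)) := by
  rintro ⟨F, hF, hR⟩
  -- Adding the negative part `APos (D' - ν) - (D' - ν)` to `F` gives a member of `|ν|`.
  refine hν ⟨F + (APos (D' - ν) - (D' - ν)), fun x => ?_, ?_⟩
  · have := hF x
    simp only [Finsupp.add_apply, Finsupp.sub_apply, aPos_apply]
    omega
  · have h1 := hE2 _ _ _ _ hR (hEquiv.refl (APos (D' - ν) - (D' - ν)))
    have h2 := hE2 _ _ _ _ (hEquiv.symm hD) (hEquiv.refl (ν - D'))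
    rw [show D - APos (D' - ν) + (APos (D' - ν) - (D' - ν)) = D + (ν - D') by abel] at h1
    rw [add_sub_cancel] at h2
    exact hEquiv.trans h1 h2

/-- Alternative rank formula assuming (RR1). -/
theorem alternative_rank_formula {X : Type} [Nonempty X]
    (R : (X →₀ ℤ) → (X →₀ ℤ) → Prop)
    (hEquiv : Equivalence R)
    (hE1 : ∀ D D' : X →₀ ℤ, R D D' → ADeg D = ADeg D')
    (hE2 : ∀ D₁ D₁' D₂ D₂' : X →₀ ℤ, R D₁ D₁' → R D₂ D₂' → R (D₁ + D₂) (D₁' + D₂'))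
    (g : ℤ) (hg : 0 ≤ g)
    (rk : (X →₀ ℤ) → ℤ) (hrk : ∀ D, IsLeast (ARankSet R D) (rk D))
    (hRR1 : ∀ D : X →₀ ℤ, ∃ ν : X →₀ ℤ, (ADeg ν = g - 1 ∧ ¬ ALinNE R ν) ∧
        Xor' (¬ ALinNE R D) (¬ ALinNE R (ν - D))) :
    ∀ D : X →₀ ℤ,
      IsLeast {n : ℤ | ∃ D' ν : X →₀ ℤ, R D' D ∧ ADeg ν = g - 1 ∧ ¬ ALinNE R ν ∧
        n = ADegPlus (D' - ν)} (rk D + 1) := by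
  intro D
  have lower : ∀ D' ν : X →₀ ℤ, R D' D → ¬ ALinNE R ν → rk D + 1 ≤ ADegPlus (D' - ν) := by
    intro D' ν hD hν
    have h := (hrk D).2 ⟨APos (D' - ν), aEff_aPos _, not_aLinNE_sub_aPos hEquiv hE2 hD hν, rfl⟩
    rw [aDeg_aPos] at h
    linarith
  refine ⟨?_, ?_⟩
  · obtain ⟨E, hE, hDE, hr⟩ := (hrk D).1
    obtain ⟨ν, ⟨hdeg, hν⟩, hx⟩ := hRR1 (D - E)
    obtain ⟨F, hF, hFR⟩ : ALinNE R (ν - (D - E)) := by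
      rcases hx with ⟨-, h⟩ | ⟨-, h⟩
      · exact not_not.mp h
      · exact absurd hDE h
    have hD' : R (ν + E - F) D := by
      have h := hE2 _ _ _ _ (hEquiv.symm hFR) (hEquiv.refl (D - F))
      convert h using 1 <;> abel
    refine ⟨ν + E - F, ν, hD', hdeg, hν, le_antisymm (lower _ _ hD' hν) ?_⟩
    have h := aDegPlus_sub_le hE hF
    rw [show ν + E - F - ν = E - F by abel]
    linarith
  · rintro n ⟨D', ν, hD, -, hν, rfl⟩
    exact lower D' ν hD hν
end
end

section
/- Existence and uniqueness of reduced divisors on graphs: Let G be a finite connected loopless multigraph, let v₀ be a vertex of G, and let D be a divisor on G. Then there exists exactly one v₀-reduced divisor equivalent to D. -/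
/-!
Write `Δ f` for the principal divisor of `f`. Everything rests on the maximum principle: at a vertex
where `f` is maximal, `Δ f` is at least the outdegree from the set of maximizers of `f`.

*Uniqueness.* If `D₁ - D₂ = Δ f` with both divisors reduced and `f` is not maximal at `v₀`, then the
set `A` of maximizers of `f` avoids `v₀` and `D₁ ≥ D₂ + outdeg_A ≥ outdeg_A` on `A`, contradicting
reducedness of `D₁`. So `f` is maximal at `v₀`, and, exchanging the divisors, also minimal there.

*Existence.* Among all `f` with `f v₀ = 0` and `D - Δ f ≥ 0` away from `v₀`, one with `∑ f` maximal
makes `D - Δ f` reduced: a set `A` violating reducedness could be fired, replacing `f` by `f + 1_A`.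
That such `f` exist and that their sums are bounded both follow from a strictly superharmonic
function: some `g` with `g v₀ = 0` and `Δ g ≥ 1` away from `v₀`
(`exists_superharmonic`). Indeed `f = -C g` is admissible for large `C`, and the maximum principle
applied to `f - C g` bounds any admissible `f` by `C g`. Connectedness enters only in the
construction of `g`, which is a constant minus `B ^ (N - dist v v₀)` for `B` larger than all
degrees.
-/

open scoped Classical

noncomputable section

/-- A divisor `D'` is equivalent to `D` if `D - D'` is the principal divisor of some
integer-valued function `f` on the vertices. -/
def GEquiv {V : Type} [Fintype V] (m : V → V → ℕ) (D D' : V → ℤ) : Prop :=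
  ∃ f : V → ℤ, ∀ v, D v - D' v = ∑ w, (m v w : ℤ) * (f v - f w)

/-- `outdeg_A(v) = Σ_{w ∉ A} m v w`. -/
def outdeg {V : Type} [Fintype V] (m : V → V → ℕ) (A : Finset V) (v : V) : ℤ :=
  ∑ w ∈ Finset.univ \ A, (m v w : ℤ)

/-- A divisor `D` is `v₀`-reduced if `D(v) ≥ 0` for all `v ≠ v₀` and every nonempty
set `A ⊆ V \ {v₀}` contains a vertex `v` with `D(v) < outdeg_A(v)`. -/
def GReduced {V : Type} [Fintype V] (m : V → V → ℕ) (v₀ : V) (D : V → ℤ) : Prop :=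
  (∀ v, v ≠ v₀ → 0 ≤ D v) ∧
    ∀ A : Finset V, A.Nonempty → v₀ ∉ A → ∃ v ∈ A, D v < outdeg m A v

/-- The principal divisor of `f`, i.e. the graph Laplacian of `f`. -/
def lap {V : Type} [Fintype V] (m : V → V → ℕ) (f : V → ℤ) (v : V) : ℤ :=
  ∑ w, (m v w : ℤ) * (f v - f w)

section Laplacian

variable {V : Type} [Fintype V] (m : V → V → ℕ)

lemma lap_sub (f g : V → ℤ) (v : V) :
    lap m (fun x => f x - g x) v = lap m f v - lap m g v := by
  simp only [lap, ← Finset.sum_sub_distrib]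
  exact Finset.sum_congr rfl fun w _ => by ring

lemma lap_add (f g : V → ℤ) (v : V) :
    lap m (fun x => f x + g x) v = lap m f v + lap m g v := by
  simp only [lap, ← Finset.sum_add_distrib]
  exact Finset.sum_congr rfl fun w _ => by ring

lemma lap_const_mul (c : ℤ) (f : V → ℤ) (v : V) :
    lap m (fun x => c * f x) v = c * lap m f v := by
  simp only [lap, Finset.mul_sum]
  exact Finset.sum_congr rfl fun w _ => by ring

lemma lap_neg (f : V → ℤ) (v : V) : lap m (fun x => -f x) v = -lap m f v := by
  simp only [lap, ← Finset.sum_neg_distrib]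
  exact Finset.sum_congr rfl fun w _ => by ring

/-- The maximum principle, in its quantitative form: at a maximizer of `f` the Laplacian is at least
the outdegree from the set of all maximizers, since `f` drops by at least one along each edge
leaving that set. -/
lemma outdeg_le_lap (f : V → ℤ) (v : V) (hv : ∀ w, f w ≤ f v) :
    outdeg m (Finset.univ.filter fun w => f w = f v) v ≤ lap m f v := by
  unfold outdeg lap
  calc ∑ w ∈ Finset.univ \ Finset.univ.filter (fun w => f w = f v), (m v w : ℤ)
      ≤ ∑ w ∈ Finset.univ \ Finset.univ.filter (fun w => f w = f v),
          (m v w : ℤ) * (f v - f w) := by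
        refine Finset.sum_le_sum fun w hw => ?_
        have h1 : f w ≠ f v := by simpa using hw
        have h2 : 1 ≤ f v - f w := by have := hv w; omega
        exact le_mul_of_one_le_right (by positivity) h2
    _ ≤ ∑ w, (m v w : ℤ) * (f v - f w) :=
        Finset.sum_le_sum_of_subset_of_nonneg (Finset.subset_univ _) fun w _ _ =>
          mul_nonneg (by positivity) (sub_nonneg.2 (hv w))

lemma outdeg_nonneg (A : Finset V) (v : V) : 0 ≤ outdeg m A v :=
  Finset.sum_nonneg fun _ _ => by positivity

/-- Firing the set `A` removes `outdeg_A v` chips from each `v ∈ A`. -/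
lemma lap_indicator_of_mem (A : Finset V) (v : V) (hv : v ∈ A) :
    lap m (fun x => if x ∈ A then 1 else 0) v = outdeg m A v := by
  unfold outdeg lap
  rw [← Finset.sum_subset (Finset.subset_univ (Finset.univ \ A))]
  · refine Finset.sum_congr rfl fun w hw => ?_
    have : w ∉ A := by simpa using hw
    simp [hv, this]
  · intro w _ hw
    have : w ∈ A := by simpa using hw
    simp [hv, this]

/-- Firing the set `A` removes no chips from the vertices outside `A`. -/
lemma lap_indicator_of_notMem (A : Finset V) (v : V) (hv : v ∉ A) :
    lap m (fun x => if x ∈ A then 1 else 0) v ≤ 0 := by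
  refine Finset.sum_nonpos fun w _ => mul_nonpos_of_nonneg_of_nonpos (by positivity) ?_
  by_cases h : w ∈ A <;> simp [hv, h]

/-- If the difference of a `v₀`-reduced divisor and a divisor that is nonnegative away from `v₀` is
the principal divisor of `f`, then `f` is maximal at `v₀`. -/
lemma le_of_reduced {v₀ : V} {D₁ D₂ f : V → ℤ} (h₁ : GReduced m v₀ D₁)
    (h₂ : ∀ v, v ≠ v₀ → 0 ≤ D₂ v) (hf : ∀ v, D₁ v - D₂ v = lap m f v) (w : V) :
    f w ≤ f v₀ := by
  obtain ⟨a, -, ha⟩ := Finset.exists_max_image Finset.univ f ⟨v₀, Finset.mem_univ _⟩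
  have ha' : ∀ w, f w ≤ f a := fun w => ha w (Finset.mem_univ _)
  by_cases h0 : f v₀ = f a
  · exact h0 ▸ ha' w
  · obtain ⟨v, hvA, hv⟩ := h₁.2 (Finset.univ.filter fun w => f w = f a)
      ⟨a, by simp⟩ (by simpa using h0)
    have hva : f v = f a := by simpa using hvA
    have hne : v ≠ v₀ := by rintro rfl; exact h0 hva
    have := outdeg_le_lap m f v (fun w => hva ▸ ha' w)
    rw [hva] at this
    have := h₂ v hne
    have := hf v
    omega

/-- A function with negative Laplacian away from `v₀` attains its maximum at `v₀`. -/
lemma le_of_lap_neg {v₀ : V} {f : V → ℤ} (hf : ∀ v, v ≠ v₀ → lap m f v < 0) (w : V) :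
    f w ≤ f v₀ := by
  obtain ⟨a, -, ha⟩ := Finset.exists_max_image Finset.univ f ⟨v₀, Finset.mem_univ _⟩
  have ha' : ∀ w, f w ≤ f a := fun w => ha w (Finset.mem_univ _)
  by_cases h0 : a = v₀
  · exact h0 ▸ ha' w
  · have h1 := outdeg_le_lap m f a ha'
    have h2 := outdeg_nonneg m (Finset.univ.filter fun w => f w = f a) a
    have h3 := hf a h0
    omega

/-- By connectedness there is a potential `c` (a constant minus the distance to `v₀`) such that
every vertex other than `v₀` has a neighbour of larger potential. -/
lemma exists_potential (hsymm : ∀ v w, m v w = m w v) (hloopless : ∀ v, m v v = 0)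
    (hconn : ∀ v w : V, Relation.ReflTransGen (fun a b => 0 < m a b) v w) (v₀ : V) :
    ∃ c : V → ℕ, ∀ v, v ≠ v₀ → ∃ w, 0 < m v w ∧ c v < c w := by
  let G : SimpleGraph V :=
    { Adj := fun a b => 0 < m a b
      symm := ⟨fun a b h => by rw [hsymm]; exact h⟩
      loopless := ⟨fun a h => by rw [hloopless] at h; exact lt_irrefl _ h⟩ }
  have hreach : ∀ v, G.Reachable v v₀ := fun v =>
    (SimpleGraph.reachable_iff_reflTransGen v v₀).2 (hconn v v₀)
  refine ⟨fun v => (∑ u, G.dist u v₀) - G.dist v v₀, fun v hv => ?_⟩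
  obtain ⟨p, hp⟩ := (hreach v).exists_walk_length_eq_dist
  cases p with
  | nil => exact absurd rfl hv
  | @cons _ w _ h q =>
    refine ⟨w, h, ?_⟩
    have h1 : G.dist w v₀ ≤ q.length := SimpleGraph.dist_le q
    have h2 : G.dist v v₀ ≤ ∑ u, G.dist u v₀ :=
      Finset.single_le_sum (f := fun u => G.dist u v₀) (fun _ _ => Nat.zero_le _)
        (Finset.mem_univ v)
    rw [SimpleGraph.Walk.length_cons] at hp
    show _ - _ < _ - _
    omega

/-- A strictly superharmonic function away from `v₀`. With `c` as in `exists_potential` and `B`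
exceeding every degree, `-B ^ c` works, because the one neighbour of larger potential outweighs all
the others. -/
lemma exists_superharmonic (hsymm : ∀ v w, m v w = m w v) (hloopless : ∀ v, m v v = 0)
    (hconn : ∀ v w : V, Relation.ReflTransGen (fun a b => 0 < m a b) v w) (v₀ : V) :
    ∃ g : V → ℤ, g v₀ = 0 ∧ ∀ v, v ≠ v₀ → 1 ≤ lap m g v := by
  obtain ⟨c, hc⟩ := exists_potential m hsymm hloopless hconn v₀
  let B : ℤ := 1 + ∑ v, ∑ w, (m v w : ℤ)
  have hdeg : ∀ v, ∑ w, (m v w : ℤ) + 1 ≤ B := fun v => by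
    have := Finset.single_le_sum (f := fun v => ∑ w, (m v w : ℤ))
      (fun _ _ => Finset.sum_nonneg fun _ _ => by positivity) (Finset.mem_univ v)
    simp only [B]
    linarith
  have hB : 1 ≤ B := by
    have : 0 ≤ ∑ w, (m v₀ w : ℤ) := Finset.sum_nonneg fun _ _ => by positivity
    linarith [hdeg v₀]
  refine ⟨fun v => B ^ c v₀ - B ^ c v, by simp, fun v hv => ?_⟩
  obtain ⟨w, hw, hcw⟩ := hc v hv
  have hpos : ∀ n : ℕ, 1 ≤ B ^ n := fun n => one_le_pow₀ hB
  have hlap : lap m (fun v => B ^ c v₀ - B ^ c v) v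
      = ∑ x, (m v x : ℤ) * B ^ c x - (∑ x, (m v x : ℤ)) * B ^ c v := by
    rw [lap, Finset.sum_mul, ← Finset.sum_sub_distrib]
    exact Finset.sum_congr rfl fun x _ => by ring
  have h1 : (m v w : ℤ) * B ^ c w ≤ ∑ x, (m v x : ℤ) * B ^ c x :=
    Finset.single_le_sum (f := fun x => (m v x : ℤ) * B ^ c x)
      (fun x _ => mul_nonneg (by positivity) (by linarith [hpos (c x)])) (Finset.mem_univ w)
  have h2 : B ^ c w ≤ (m v w : ℤ) * B ^ c w :=
    le_mul_of_one_le_left (by linarith [hpos (c w)]) (by exact_mod_cast hw)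
  have h3 : B ^ (c v + 1) ≤ B ^ c w := pow_le_pow_right₀ hB hcw
  rw [pow_succ] at h3
  have h4 : B ^ c v * 1 ≤ B ^ c v * (B - ∑ x, (m v x : ℤ)) :=
    mul_le_mul_of_nonneg_left (by linarith [hdeg v]) (by linarith [hpos (c v)])
  rw [hlap]
  linarith [hpos (c v)]

end Laplacian

/-- Existence and uniqueness of reduced divisors on graphs. -/
theorem reduced_divisor_exists_unique {V : Type} [Fintype V] [Nonempty V]
    (m : V → V → ℕ)
    (hsymm : ∀ v w, m v w = m w v)
    (hloopless : ∀ v, m v v = 0)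
    (hconn : ∀ v w : V, Relation.ReflTransGen (fun a b => 0 < m a b) v w)
    (v₀ : V) (D : V → ℤ) :
    ∃! D₀ : V → ℤ, GEquiv m D₀ D ∧ GReduced m v₀ D₀ := by
  have hex : ∃ f : V → ℤ, GReduced m v₀ (fun v => D v - lap m f v) := by
    obtain ⟨g, hg0, hg⟩ := exists_superharmonic m hsymm hloopless hconn v₀
    let C : ℤ := ∑ v, |D v|
    have hC : ∀ v, |D v| ≤ C := fun v =>
      Finset.single_le_sum (f := fun v => |D v|) (fun _ _ => abs_nonneg _) (Finset.mem_univ v)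
    have hC0 : 0 ≤ C := (abs_nonneg _).trans (hC v₀)
    let S : (V → ℤ) → Prop := fun f => f v₀ = 0 ∧ ∀ v, v ≠ v₀ → 0 ≤ D v - lap m f v
    have hne : S (fun x => -C * g x) := by
      refine ⟨by simp [hg0], fun v hv => ?_⟩
      rw [lap_const_mul]
      have := mul_le_mul_of_nonneg_left (hg v hv) hC0
      have := neg_le_of_abs_le (hC v)
      linarith
    have hbd : ∀ f, S f → ∀ w, f w ≤ (C + 1) * g w := by
      rintro f ⟨hf0, hf⟩ w
      have := le_of_lap_neg m (v₀ := v₀) (f := fun x => f x - (C + 1) * g x) (fun v hv => by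
        rw [lap_sub, lap_const_mul]
        have := mul_le_mul_of_nonneg_left (hg v hv) (by linarith : 0 ≤ C + 1)
        have := le_of_abs_le (hC v)
        linarith [hf v hv]) w
      simp only [hf0, hg0] at this
      linarith
    obtain ⟨s, ⟨f, hf, rfl⟩, hmax⟩ := Int.exists_greatest_of_bdd
      (P := fun s => ∃ f, S f ∧ ∑ w, f w = s)
      ⟨∑ w, (C + 1) * g w, by
        rintro _ ⟨f, hf, rfl⟩
        exact Finset.sum_le_sum fun w _ => hbd f hf w⟩
      ⟨_, fun x => -C * g x, hne, rfl⟩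
    refine ⟨f, hf.2, fun A hA hv₀ => ?_⟩
    by_contra! hcon
    -- `A` can be fired, which stays admissible and increases the sum by `#A`.
    have hS : S (fun x => f x + if x ∈ A then 1 else 0) := by
      refine ⟨by simp [hf.1, hv₀], fun v hv => ?_⟩
      rw [lap_add]
      by_cases hvA : v ∈ A
      · rw [lap_indicator_of_mem m A v hvA]
        linarith [hcon v hvA]
      · linarith [lap_indicator_of_notMem m A v hvA, hf.2 v hv]
    have h1 := hmax _ ⟨fun x => f x + if x ∈ A then 1 else 0, hS, rfl⟩
    rw [Finset.sum_add_distrib] at h1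
    have h2 : (∑ x : V, if x ∈ A then (1 : ℤ) else 0) = A.card := by simp
    have h3 : 0 < A.card := hA.card_pos
    omega
  obtain ⟨f, hf⟩ := hex
  refine ⟨fun v => D v - lap m f v, ⟨⟨fun x => -f x, fun v => ?_⟩, hf⟩, ?_⟩
  · change _ = lap m (fun x => -f x) v
    rw [lap_neg]
    ring
  · rintro D' ⟨⟨f', hf'⟩, hD'⟩
    have hf'' : ∀ v, D' v - D v = lap m f' v := hf'
    have h1 := le_of_reduced m (f := fun x => f' x + f x) hD' hf.1
      (fun v => by rw [lap_add]; linarith [hf'' v])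
    have h2 := le_of_reduced m (f := fun x => -(f' x + f x)) hf hD'.1
      (fun v => by rw [lap_neg, lap_add]; linarith [hf'' v])
    have hconst : ∀ w, f' w + f w = f' v₀ + f v₀ := fun w =>
      le_antisymm (h1 w) (neg_le_neg_iff.1 (h2 w))
    funext v
    have h3 : lap m (fun x => f' x + f x) v = 0 :=
      Finset.sum_eq_zero fun w _ => by simp [hconst]
    rw [lap_add] at h3
    linarith [hf'' v]
end
end
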